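/- arXiv:2208.11570 — 13 statements merged into one kernel-verified Lean document; each statement's English description precedes it below -/
import Mathlib

section
/- Let (Ω, ℱ, ℙ) be a probability space and p_1, …, p_m : Ω → ℝ measurable random p-values with values in (0,1]; let 𝒩 ⊆ {1,…,m} be fixed with |𝒩| = N, and let t ∈ [0,1]. Suppose Assumption 1 holds: ℙ{ω : |{i ∈ 𝒩 : p_i(ω) ≤ t}| > |{i : p_i(ω) ≥ 1 − t}|} ≤ 1/2. Then (a) ℙ{ω : V(t)(ω) ≤ V̄'(t)(ω)} ≥ 1/2, i.e. V̄'(t) is a median unbiased (50%-confidence upper) estimate of V(t); and (b) ℙ{ω : N ≤ |{i : p_i(ω) > t}| + |{i : p_i(ω) ≥ 1 − t}|} ≥ 1/2, i.e. π̄₀' = (|{i : p_i > t}| + |{i : p_i ≥ 1 − t}|)/m is a median unbiased estimate of π₀ = N/m. (Theorem 1.) -/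
/-!
Claim (a) bounds from below the probability of the complement of the event in the hypothesis, which
is subadditivity of `μ` together with `μ Ω = 1`. Claim (b) follows from (a) by
monotonicity: pointwise, `N = V(t) + |{i ∈ 𝒩 : p i > t}| ≤ V(t) + |{i : p i > t}|`, so
`V(t) ≤ |{i : p i ≥ 1 - t}|` implies the inequality in (b).
-/

open Finset MeasureTheory

/-- Theorem 1: under Assumption 1, `V̄'(t)` is a median unbiased upper estimate of `V(t)`,
and `π̄₀' = (|{i : p_i > t}| + |{i : p_i ≥ 1 - t}|)/m` is a median unbiased estimate of
`π₀ = N/m` (equivalently `N ≤ |{i : p_i > t}| + |{i : p_i ≥ 1 - t}|` with probability ≥ 1/2). -/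
theorem stmt_1 {Ω : Type*} [MeasurableSpace Ω] (μ : Measure Ω) [IsProbabilityMeasure μ]
    (m : ℕ) (p : Fin m → Ω → ℝ)
    (hmeas : ∀ i, Measurable (p i))
    (hp : ∀ i ω, p i ω ∈ Set.Ioc (0 : ℝ) 1)
    (𝒩 : Finset (Fin m)) (t : ℝ) (ht : t ∈ Set.Icc (0 : ℝ) 1)
    (has1 : μ {ω | (Finset.univ.filter fun i : Fin m => 1 - t ≤ p i ω).card <
        (𝒩.filter fun i => p i ω ≤ t).card} ≤ 1 / 2) :
    1 / 2 ≤ μ {ω | (𝒩.filter fun i => p i ω ≤ t).card ≤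
        (Finset.univ.filter fun i : Fin m => 1 - t ≤ p i ω).card} ∧
    1 / 2 ≤ μ {ω | 𝒩.card ≤ (Finset.univ.filter fun i : Fin m => t < p i ω).card +
        (Finset.univ.filter fun i : Fin m => 1 - t ≤ p i ω).card} := by
  -- The event in `has1` and the one in (a) cover `Ω`, so subadditivity alone gives (a).
  have ha : 1 / 2 ≤ μ {ω | (𝒩.filter fun i => p i ω ≤ t).card ≤
      (Finset.univ.filter fun i : Fin m => 1 - t ≤ p i ω).card} := by
    have hcover : (1 : ENNReal) ≤ μ {ω | (𝒩.filter fun i => p i ω ≤ t).card ≤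
        (Finset.univ.filter fun i : Fin m => 1 - t ≤ p i ω).card} + 1 / 2 := by
      refine (measure_univ (μ := μ)).ge.trans ?_
      refine le_trans (measure_mono ?_) ((measure_union_le _ _).trans (add_le_add_right has1 _))
      intro ω _
      simp only [Set.mem_union, Set.mem_ofPred_eq]
      exact le_or_gt _ _
    have hhalf : (1 : ENNReal) - 1 / 2 = 1 / 2 := by
      rw [one_div, ENNReal.one_sub_inv_two]
    rw [← hhalf]
    exact tsub_le_iff_right.mpr hcover
  -- For (b), the number of true nulls is `V(t)` plus the number of true nulls with `t < p i`.
  refine ⟨ha, ha.trans (measure_mono fun ω hω => ?_)⟩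
  simp only [Set.mem_ofPred_eq] at hω ⊢
  have hsplit := Finset.card_filter_add_card_filter_not (s := 𝒩) (fun i => p i ω ≤ t)
  have hnulls : (𝒩.filter fun i => ¬ p i ω ≤ t).card ≤
      (Finset.univ.filter fun i : Fin m => t < p i ω).card := by
    simp only [not_le]
    exact Finset.card_le_card (Finset.filter_subset_filter _ (Finset.subset_univ _))
  omega
end

section
/- Let (Ω, ℱ, ℙ) be a probability space, N ≥ 1, and let q : Ω → (Fin N → ℝ) be a measurable random vector such that (q_1,…,q_N) and (1 − q_1, …, 1 − q_N) have the same distribution (equal pushforward measures on Fin N → ℝ). Then for every t ∈ ℝ, ℙ{ω : |{i : q_i(ω) ≤ t}| > |{i : q_i(ω) ≥ 1 − t}|} ≤ 1/2. (The paper's claim that the symmetry property (5) implies Assumption 1.) -/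
/-! Let `A ⊆ ℝ^N` be the set of vectors with more coordinates `≤ t` than coordinates `≥ 1 - t`.
The reflection `x ↦ 1 - x` swaps the two counts, so it maps `A` to the set `B` where the strict
inequality is reversed. By symmetry of the law, the events `q ∈ A` and `q ∈ B` are equally likely;
being disjoint, each has probability at most `1/2`. -/

open Finset MeasureTheory

lemma measurableSet_card_lt (N : ℕ) (t : ℝ) :
    MeasurableSet {x : Fin N → ℝ | (Finset.univ.filter fun i : Fin N => 1 - t ≤ x i).card <
      (Finset.univ.filter fun i : Fin N => x i ≤ t).card} := by
  simp only [Finset.card_filter]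
  refine measurableSet_lt ?_ ?_
  · refine Finset.measurable_sum _ fun i _ => ?_
    exact Measurable.ite (measurableSet_le measurable_const (measurable_pi_apply i))
      measurable_const measurable_const
  · refine Finset.measurable_sum _ fun i _ => ?_
    exact Measurable.ite (measurableSet_le (measurable_pi_apply i) measurable_const)
      measurable_const measurable_const

/-- The symmetry property (5) — `(q_1,…,q_N)` and `(1-q_1,…,1-q_N)` equal in distribution —
implies Assumption 1: for every `t`, the probability that `|{i : q_i ≤ t}|` exceeds
`|{i : q_i ≥ 1 - t}|` is at most 1/2. -/
theorem stmt_3 {Ω : Type*} [MeasurableSpace Ω] (μ : Measure Ω) [IsProbabilityMeasure μ]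
    (N : ℕ) (hN : 1 ≤ N) (q : Ω → (Fin N → ℝ))
    (hmeas : Measurable q)
    (hsymm : Measure.map q μ = Measure.map (fun ω => fun i => 1 - q ω i) μ) :
    ∀ t : ℝ, μ {ω | (Finset.univ.filter fun i : Fin N => 1 - t ≤ q ω i).card <
        (Finset.univ.filter fun i : Fin N => q ω i ≤ t).card} ≤ 1 / 2 := by
  intro t
  have hA := measurableSet_card_lt N t
  set A := {x : Fin N → ℝ | (Finset.univ.filter fun i : Fin N => 1 - t ≤ x i).card <
      (Finset.univ.filter fun i : Fin N => x i ≤ t).card} with hAdef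
  have hr : Measurable (fun ω => fun i => 1 - q ω i) :=
    measurable_pi_lambda _ fun i => measurable_const.sub ((measurable_pi_apply i).comp hmeas)
  have heq : μ (q ⁻¹' A) = μ ((fun ω => fun i => 1 - q ω i) ⁻¹' A) := by
    rw [← Measure.map_apply hmeas hA, ← Measure.map_apply hr hA, hsymm]
  have hdisj : Disjoint (q ⁻¹' A) ((fun ω => fun i => 1 - q ω i) ⁻¹' A) := by
    rw [Set.disjoint_left]
    intro ω h1 h2
    have e1 : ∀ i, (1 - t ≤ 1 - q ω i) ↔ q ω i ≤ t := fun i => by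
      constructor <;> intro h <;> linarith
    have e2 : ∀ i, (1 - q ω i ≤ t) ↔ 1 - t ≤ q ω i := fun i => by
      constructor <;> intro h <;> linarith
    simp only [hAdef, Set.mem_preimage, Set.mem_ofPred_eq, e1, e2] at h1 h2
    exact lt_asymm h1 h2
  have hsum : μ (q ⁻¹' A) + μ (q ⁻¹' A) ≤ 1 := by
    calc μ (q ⁻¹' A) + μ (q ⁻¹' A)
        = μ (q ⁻¹' A ∪ (fun ω => fun i => 1 - q ω i) ⁻¹' A) := by
          rw [measure_union hdisj (hr hA), ← heq]
      _ ≤ 1 := prob_le_one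
  change μ (q ⁻¹' A) ≤ 1 / 2
  rw [ENNReal.le_div_iff_mul_le (by simp) (by simp), mul_two]
  exact hsum
end

section
/- Let (Ω, ℱ, ℙ) be a probability space, m ≥ 1, p_1,…,p_m : Ω → ℝ measurable with values in (0,1], and t ∈ (0,1) with t ≠ 1/2. Put t' = min(t, 1 − t). Assume (i) 𝔼[|{i : p_i = 1 − t}|] = 0 and (ii) (1 − t')·𝔼[|{i : p_i > 1 − t'}|] ≤ t'·𝔼[|{i : p_i > t'}|]. Define π̂₀' = |{i : p_i > 1 − t}|/(m·t) and π̄₀' = (|{i : p_i > t}| + |{i : p_i ≥ 1 − t}|)/m (random variables of ω). Then: if t < 1/2 then 𝔼[π̄₀'] ≥ 𝔼[π̂₀'], and if t > 1/2 then 𝔼[π̄₀'] ≤ 𝔼[π̂₀']. Moreover, if the inequality (ii) is strict, then the corresponding conclusion is strict. (Proposition 1.) -/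
open Finset MeasureTheory

/-!
Write `N c` for the expected number of `p i` exceeding `c`. By (i), the expected number of
`p i ≥ 1 - t` is also `N (1 - t)`, so by linearity the two expectations to be compared are
`N (1 - t) / (m t)` and `(N t + N (1 - t)) / m`. After multiplication by `m t`, the inequality
`N (1 - t) ≤ t N t + t N (1 - t)` is `(1 - t) N (1 - t) ≤ t N t`, which is (ii) when
`t < 1 / 2`; when `t > 1 / 2`, so that `t' = 1 - t`, (ii) is the reverse of this inequality.
-/

lemma integrable_count {Ω : Type*} [MeasurableSpace Ω] (μ : Measure Ω) [IsProbabilityMeasure μ]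
    {m : ℕ} (P : Fin m → Ω → Prop) [∀ ω, DecidablePred fun i => P i ω]
    (hP : ∀ i, MeasurableSet {ω | P i ω}) :
    Integrable (fun ω => ((Finset.univ.filter fun i : Fin m => P i ω).card : ℝ)) μ := by
  have h : (fun ω => ((Finset.univ.filter fun i : Fin m => P i ω).card : ℝ)) =
      fun ω => ∑ i, Set.indicator {ω | P i ω} (fun _ => (1 : ℝ)) ω := by
    funext ω
    simp [Set.indicator_apply]
  rw [h]
  exact integrable_finsetSum _ fun i _ => (integrable_const 1).indicator (hP i)

/-- Proposition 1: comparison of the expected values of the Schweder–Spjøtvoll–Storey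
estimate `π̂₀'` and the paper's estimate `π̄₀'`, with `t' = min(t, 1-t)`, under
(i) `𝔼|{i : p_i = 1-t}| = 0` and (ii) `(1-t')·𝔼|{i : p_i > 1-t'}| ≤ t'·𝔼|{i : p_i > t'}|`;
strict inequality in (ii) gives strict conclusions. -/
theorem stmt_5 {Ω : Type*} [MeasurableSpace Ω] (μ : Measure Ω) [IsProbabilityMeasure μ]
    (m : ℕ) (p : Fin m → Ω → ℝ)
    (hmeas : ∀ i, Measurable (p i))
    (hp : ∀ i ω, p i ω ∈ Set.Ioc (0 : ℝ) 1)
    (t : ℝ) (ht : t ∈ Set.Ioo (0 : ℝ) 1) (htne : t ≠ 1 / 2)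
    (t' : ℝ) (ht' : t' = min t (1 - t))
    (hi : ∫ ω, ((Finset.univ.filter fun i : Fin m => p i ω = 1 - t).card : ℝ) ∂μ = 0)
    (hii : (1 - t') * ∫ ω, ((Finset.univ.filter fun i : Fin m => 1 - t' < p i ω).card : ℝ) ∂μ ≤
        t' * ∫ ω, ((Finset.univ.filter fun i : Fin m => t' < p i ω).card : ℝ) ∂μ) :
    ((t < 1 / 2 →
        (∫ ω, ((Finset.univ.filter fun i : Fin m => 1 - t < p i ω).card : ℝ) / (m * t) ∂μ) ≤
        ∫ ω, (((Finset.univ.filter fun i : Fin m => t < p i ω).card : ℝ) +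
            ((Finset.univ.filter fun i : Fin m => 1 - t ≤ p i ω).card : ℝ)) / m ∂μ) ∧
      (1 / 2 < t →
        (∫ ω, (((Finset.univ.filter fun i : Fin m => t < p i ω).card : ℝ) +
            ((Finset.univ.filter fun i : Fin m => 1 - t ≤ p i ω).card : ℝ)) / m ∂μ) ≤
        ∫ ω, ((Finset.univ.filter fun i : Fin m => 1 - t < p i ω).card : ℝ) / (m * t) ∂μ)) ∧
    ((1 - t') * ∫ ω, ((Finset.univ.filter fun i : Fin m => 1 - t' < p i ω).card : ℝ) ∂μ <
        t' * ∫ ω, ((Finset.univ.filter fun i : Fin m => t' < p i ω).card : ℝ) ∂μ →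
      (t < 1 / 2 →
        (∫ ω, ((Finset.univ.filter fun i : Fin m => 1 - t < p i ω).card : ℝ) / (m * t) ∂μ) <
        ∫ ω, (((Finset.univ.filter fun i : Fin m => t < p i ω).card : ℝ) +
            ((Finset.univ.filter fun i : Fin m => 1 - t ≤ p i ω).card : ℝ)) / m ∂μ) ∧
      (1 / 2 < t →
        (∫ ω, (((Finset.univ.filter fun i : Fin m => t < p i ω).card : ℝ) +
            ((Finset.univ.filter fun i : Fin m => 1 - t ≤ p i ω).card : ℝ)) / m ∂μ) <
        ∫ ω, ((Finset.univ.filter fun i : Fin m => 1 - t < p i ω).card : ℝ) / (m * t) ∂μ)) := by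
  obtain ⟨h0, h1⟩ := ht
  have hgt : ∀ c : ℝ, Integrable
      (fun ω => ((Finset.univ.filter fun i : Fin m => c < p i ω).card : ℝ)) μ := fun c =>
    integrable_count μ (fun i ω => c < p i ω) fun i => measurableSet_lt measurable_const (hmeas i)
  have heq : Integrable
      (fun ω => ((Finset.univ.filter fun i : Fin m => p i ω = 1 - t).card : ℝ)) μ :=
    integrable_count μ (fun i ω => p i ω = 1 - t) fun i =>
      measurableSet_eq_fun (hmeas i) measurable_const
  have hsplit : (fun ω => ((Finset.univ.filter fun i : Fin m => 1 - t ≤ p i ω).card : ℝ)) =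
      fun ω => ((Finset.univ.filter fun i : Fin m => 1 - t < p i ω).card : ℝ) +
        ((Finset.univ.filter fun i : Fin m => p i ω = 1 - t).card : ℝ) := by
    funext ω
    rw [← Nat.cast_add, ← Finset.card_union_of_disjoint, ← Finset.filter_or]
    · simp only [le_iff_lt_or_eq, eq_comm]
    · exact Finset.disjoint_filter.2 fun i _ h h' => h.ne h'.symm
  have hge : Integrable
      (fun ω => ((Finset.univ.filter fun i : Fin m => 1 - t ≤ p i ω).card : ℝ)) μ := by
    rw [hsplit]
    exact (hgt _).add heq
  have hgeint : ∫ ω, ((Finset.univ.filter fun i : Fin m => 1 - t ≤ p i ω).card : ℝ) ∂μ =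
      ∫ ω, ((Finset.univ.filter fun i : Fin m => 1 - t < p i ω).card : ℝ) ∂μ := by
    rw [hsplit, integral_add (hgt _) heq, hi, add_zero]
  rw [integral_div, integral_div, integral_add (hgt _) hge, hgeint]
  rcases Nat.eq_zero_or_pos m with rfl | hm
  · simp
  have hm' : (0 : ℝ) < m := Nat.cast_pos.2 hm
  rcases lt_or_gt_of_ne htne with hlt | hlt
  · obtain rfl : t' = t := by rw [ht', min_eq_left (by linarith)]
    generalize ∫ ω, ((Finset.univ.filter fun i : Fin m => t' < p i ω).card : ℝ) ∂μ = A at *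
    generalize ∫ ω, ((Finset.univ.filter fun i : Fin m => 1 - t' < p i ω).card : ℝ) ∂μ = B at *
    have key : (A + B) / m = (t' * A + t' * B) / (m * t') := by field_simp
    rw [key]
    refine ⟨⟨fun _ => ?_, fun h => absurd h hlt.not_gt⟩,
      fun hs => ⟨fun _ => ?_, fun h => absurd h hlt.not_gt⟩⟩
    · gcongr
      linarith
    · gcongr
      linarith
  · obtain rfl : t' = 1 - t := by rw [ht', min_eq_right (by linarith)]
    rw [sub_sub_cancel] at hii ⊢
    generalize ∫ ω, ((Finset.univ.filter fun i : Fin m => t < p i ω).card : ℝ) ∂μ = A at *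
    generalize ∫ ω, ((Finset.univ.filter fun i : Fin m => 1 - t < p i ω).card : ℝ) ∂μ = B at *
    have key : (A + B) / m = (t * A + t * B) / (m * t) := by field_simp
    rw [key]
    refine ⟨⟨fun h => absurd h hlt.not_gt, fun _ => ?_⟩,
      fun hs => ⟨fun h => absurd h hlt.not_gt, fun _ => ?_⟩⟩
    · gcongr
      linarith
    · gcongr
      linarith
end

section
/- Let m ≥ 1, p : Fin m → ℝ with p_i ∈ (0,1] for all i, 𝒩 ⊆ Fin m, 𝒯 ⊆ ℝ, and B : ℝ → ℕ. Define B'(t) = (R(t) : ℤ) − max(0, sup{ (R(l) : ℤ) − (B(l) : ℤ) : l ∈ 𝒯, l ≤ t }) for t ∈ 𝒯. If |{i ∈ 𝒩 : p_i ≤ t}| ≤ B(t) for all t ∈ 𝒯, then (|{i ∈ 𝒩 : p_i ≤ t}| : ℤ) ≤ B'(t) for all t ∈ 𝒯; moreover B'(t) ≤ B(t) for all t ∈ 𝒯. (Theorem 3, second part: the improved envelope B̃' is valid whenever B̃ is, and B̃' ≤ B̃.) -/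
/-!
For `l ≤ t` in `𝒯`, validity of `B` gives `R(l) - B(l) ≤ R(l) - V(l) ≤ R(t) - V(t)`, the second
step because `R - V` counts rejected non-nulls and so is monotone (`card_reject_eq_add`). Hence
`R(t) - V(t) ≥ 0` bounds the set whose supremum enters `B'(t)`, which gives `V(t) ≤ B'(t)`.
Taking `l = t` in the supremum gives `B'(t) ≤ B(t)`.
-/

open Finset

/-- The number of rejected non-nulls, `R(t) - V(t)`, counts the indices outside `𝒩` with
`p i ≤ t`; in this form its monotonicity in `t` is evident. -/
lemma card_reject_eq_add (m : ℕ) (p : Fin m → ℝ) (𝒩 : Finset (Fin m)) (t : ℝ) :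
    (Finset.univ.filter fun i : Fin m => p i ≤ t).card =
      (𝒩.filter fun i => p i ≤ t).card + (𝒩ᶜ.filter fun i => p i ≤ t).card := by
  rw [← Finset.card_union_of_disjoint
    (Finset.disjoint_filter_filter disjoint_compl_right), ← Finset.filter_union,
    Finset.union_compl]

/-- Theorem 3, second part: the improved envelope
`B'(t) = R(t) - max(0, sup{R(l) - B(l) : l ∈ 𝒯, l ≤ t})` is valid whenever `B` is
(it still dominates `V(t)` on `𝒯`), and `B'(t) ≤ B(t)` on `𝒯`. -/
theorem stmt_9 (m : ℕ) (hm : 1 ≤ m) (p : Fin m → ℝ)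
    (hp : ∀ i, p i ∈ Set.Ioc (0 : ℝ) 1)
    (𝒩 : Finset (Fin m)) (𝒯 : Set ℝ) (B : ℝ → ℕ)
    (B' : ℝ → ℤ)
    (hB' : ∀ t ∈ 𝒯, B' t = ((Finset.univ.filter fun i : Fin m => p i ≤ t).card : ℤ) -
      max 0 (sSup {x : ℤ | ∃ l ∈ 𝒯, l ≤ t ∧
        x = ((Finset.univ.filter fun i : Fin m => p i ≤ l).card : ℤ) - (B l : ℤ)}))
    (hV : ∀ t ∈ 𝒯, (𝒩.filter fun i => p i ≤ t).card ≤ B t) :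
    (∀ t ∈ 𝒯, ((𝒩.filter fun i => p i ≤ t).card : ℤ) ≤ B' t) ∧
    (∀ t ∈ 𝒯, B' t ≤ (B t : ℤ)) := by
  have bound : ∀ t, ∀ x ∈ {x : ℤ | ∃ l ∈ 𝒯, l ≤ t ∧
      x = ((Finset.univ.filter fun i : Fin m => p i ≤ l).card : ℤ) - (B l : ℤ)},
      x ≤ ((𝒩ᶜ.filter fun i => p i ≤ t).card : ℤ) := by
    rintro t x ⟨l, hl, hlt, rfl⟩
    have hmono : (𝒩ᶜ.filter fun i => p i ≤ l).card ≤ (𝒩ᶜ.filter fun i => p i ≤ t).card :=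
      Finset.card_le_card
        (Finset.monotone_filter_right _ fun i _ hi => le_trans hi hlt)
    have hsplit := card_reject_eq_add m p 𝒩 l
    have hVl := hV l hl
    omega
  have mem : ∀ t ∈ 𝒯, ((Finset.univ.filter fun i : Fin m => p i ≤ t).card : ℤ) - (B t : ℤ) ∈
      {x : ℤ | ∃ l ∈ 𝒯, l ≤ t ∧
        x = ((Finset.univ.filter fun i : Fin m => p i ≤ l).card : ℤ) - (B l : ℤ)} :=
    fun t ht => ⟨t, ht, le_rfl, rfl⟩
  refine ⟨fun t ht => ?_, fun t ht => ?_⟩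
  · have hsup := csSup_le (Set.nonempty_of_mem (mem t ht)) (bound t)
    have hmax := max_le (Int.natCast_nonneg _) hsup
    have hsplit := card_reject_eq_add m p 𝒩 t
    rw [hB' t ht]
    omega
  · have hle := (le_csSup (bddAbove_def.2 ⟨_, bound t⟩) (mem t ht)).trans (le_max_right 0 _)
    rw [hB' t ht]
    linarith
end

section
/- Let (Ω, ℱ, ℙ) be a probability space, p_1,…,p_m : Ω → ℝ measurable random p-values with values in (0,1], 𝒩 ⊆ {1,…,m}, 𝒯 ⊆ ℝ, and let B : Ω → (𝒯 → ℤ) be a (possibly data-dependent) function such that ℙ{ω : ∀ t ∈ 𝒯, (V(t)(ω) : ℤ) ≤ B(ω)(t)} ≥ 1/2. For each ω and each nonempty I ⊆ {1,…,m} define B̄_ω(I) = max{ |A| : ∅ ≠ A ⊆ I and ∀ t ∈ 𝒯, (|{i ∈ A : p_i(ω) ≤ t}| : ℤ) ≤ B(ω)(t) } (0 if no such A exists). Then ℙ{ω : ∀ nonempty I ⊆ {1,…,m}, |𝒩 ∩ I| ≤ B̄_ω(I)} ≥ 1/2, i.e. the B̄(I) are simultaneous 50%-confidence upper bounds for the number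 of true null hypotheses in I. (Theorem 4.) -/
open Finset MeasureTheory

/-- Theorem 4: if `B` is a 50%-confidence envelope for `V` on `𝒯`, the closed-testing bounds
`B̄_ω(I) = max{|A| : ∅ ≠ A ⊆ I, ∀ t ∈ 𝒯, |{i ∈ A : p_i(ω) ≤ t}| ≤ B(ω)(t)}` (0 if none)
are simultaneous 50%-confidence upper bounds for `|𝒩 ∩ I|` over all nonempty `I`. -/
theorem stmt_11 {Ω : Type*} [MeasurableSpace Ω] (μ : Measure Ω) [IsProbabilityMeasure μ]
    (m : ℕ) (p : Fin m → Ω → ℝ)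
    (hmeas : ∀ i, Measurable (p i))
    (hp : ∀ i ω, p i ω ∈ Set.Ioc (0 : ℝ) 1)
    (𝒩 : Finset (Fin m)) (𝒯 : Set ℝ) (B : Ω → ℝ → ℤ)
    (hB : 1 / 2 ≤ μ {ω | ∀ t ∈ 𝒯, ((𝒩.filter fun i => p i ω ≤ t).card : ℤ) ≤ B ω t}) :
    1 / 2 ≤ μ {ω | ∀ I : Finset (Fin m), I.Nonempty →
      (𝒩 ∩ I).card ≤ sSup {n : ℕ | ∃ A : Finset (Fin m), A.Nonempty ∧ A ⊆ I ∧
        (∀ t ∈ 𝒯, ((A.filter fun i => p i ω ≤ t).card : ℤ) ≤ B ω t) ∧ n = A.card}} := by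
  -- On the event that `B` dominates `V`, the set `A = 𝒩 ∩ I` itself is admissible, since
  -- passing to a subset of `𝒩` only lowers the counts. Monotonicity of `μ` then suffices.
  refine hB.trans (measure_mono fun ω hω I _ => ?_)
  rcases (𝒩 ∩ I).eq_empty_or_nonempty with h | h
  · simp [h]
  · -- The set of sizes is bounded by `|I|`, so its `sSup` in `ℕ` is a genuine maximum.
    refine le_csSup ⟨I.card, ?_⟩ ⟨𝒩 ∩ I, h, inter_subset_right, fun t ht => ?_, rfl⟩
    · rintro n ⟨A, -, hA, -, rfl⟩
      exact card_le_card hA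
    · refine le_trans ?_ (hω t ht)
      exact_mod_cast card_le_card (filter_subset_filter _ inter_subset_left)
end

section
/- Let m ≥ 1, p : Fin m → ℝ, 𝒯 ⊆ ℝ, and B : ℝ → ℕ nondecreasing on 𝒯 (i.e. t₁ ≤ t₂ with t₁, t₂ ∈ 𝒯 implies B(t₁) ≤ B(t₂)). Define R(t) = |{i : p_i ≤ t}|, B'(t) = (R(t) : ℤ) − max(0, sup{ (R(l) : ℤ) − (B(l) : ℤ) : l ∈ 𝒯, l ≤ t }) for t ∈ 𝒯, and, for I ⊆ Fin m, B̄(I) = max{ |A| : ∅ ≠ A ⊆ I and ∀ t ∈ 𝒯, (|{i ∈ A : p_i ≤ t}| : ℤ) ≤ B'(t) } (0 if no such A exists). Then for every s ∈ 𝒯, (B̄({i : p_i ≤ s}) : ℤ) = B'(s). (First claim of Theorem 5: the envelope B̃' coincides with the closed-testing bound B̄(ℛ(t)).) -/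
/-!
Write `R t` for the number of p-values at most `t` and `D t` for the subtracted term
`max 0 (sup {R l - B l : l ∈ 𝒯, l ≤ t})`, so that `B' = R - D` on `𝒯`. An admissible `A ⊆ ℛ(s)`
satisfies `|A| = |A ∩ ℛ(s)| ≤ B' s`, which is the upper bound. For the lower bound, remove from
`ℛ(s)` a set `C` consisting of its `D s` smallest p-values (`exists_lower_subset`). The set
`A = ℛ(s) \ C` has `B' s` elements, and it is admissible:

* for `t ≤ s`, `C` either contains `ℛ(t)` or is contained in it, so
  `|C ∩ ℛ(t)| ≥ min (D s) (R t) ≥ D t`, because `D` is nondecreasing and `D ≤ R`;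
* for `t ≥ s`, `|A ∩ ℛ(t)| = B' s ≤ B' t`, because `B'` is nondecreasing. This last fact is where
  monotonicity of `B` enters: for `t₁ ≤ l ≤ t₂` one has
  `R l - B l ≤ R l - B t₁ ≤ D t₁ + R t₂ - R t₁`.
-/

open Finset

/-- A finite set has, for each `k` up to its size, a subset of its `k` smallest elements with
respect to `p` (ties broken arbitrarily). -/
lemma exists_lower_subset {ι : Type*} [DecidableEq ι] (p : ι → ℝ) (S : Finset ι) (k : ℕ)
    (hk : k ≤ S.card) :
    ∃ C ⊆ S, C.card = k ∧ ∀ i ∈ C, ∀ j ∈ S, p j < p i → j ∈ C := by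
  induction k with
  | zero => exact ⟨∅, by simp, by simp, by simp⟩
  | succ k ih =>
    obtain ⟨C, hCS, hC, hlow⟩ := ih (by omega)
    have hne : (S \ C).Nonempty := by
      rw [← Finset.card_pos, Finset.card_sdiff_of_subset hCS]
      omega
    obtain ⟨a, ha, hmin⟩ := Finset.exists_min_image (S \ C) p hne
    rw [Finset.mem_sdiff] at ha
    refine ⟨insert a C, Finset.insert_subset ha.1 hCS, ?_, ?_⟩
    · rw [Finset.card_insert_of_notMem ha.2, hC]
    · intro i hi j hj hji
      rw [Finset.mem_insert] at hi ⊢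
      rcases hi with rfl | hi
      · by_contra hcon
        push Not at hcon
        exact absurd (hmin j (Finset.mem_sdiff.2 ⟨hj, hcon.2⟩)) (not_le.2 hji)
      · exact Or.inr (hlow i hi j hj hji)

/-- First claim of Theorem 5: for a `ℕ`-valued envelope `B` nondecreasing on `𝒯`, the
improved envelope `B'(t) = R(t) - max(0, sup{R(l) - B(l) : l ∈ 𝒯, l ≤ t})` coincides, at
every `s ∈ 𝒯`, with the closed-testing bound `B̄(ℛ(s))` built from `B'`. -/
theorem stmt_12 (m : ℕ) (hm : 1 ≤ m) (p : Fin m → ℝ)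
    (𝒯 : Set ℝ) (B : ℝ → ℕ)
    (hmono : ∀ t₁ ∈ 𝒯, ∀ t₂ ∈ 𝒯, t₁ ≤ t₂ → B t₁ ≤ B t₂)
    (B' : ℝ → ℤ)
    (hB' : ∀ t ∈ 𝒯, B' t = ((Finset.univ.filter fun i : Fin m => p i ≤ t).card : ℤ) -
      max 0 (sSup {x : ℤ | ∃ l ∈ 𝒯, l ≤ t ∧
        x = ((Finset.univ.filter fun i : Fin m => p i ≤ l).card : ℤ) - (B l : ℤ)})) :
    ∀ s ∈ 𝒯,
      ((sSup {n : ℕ | ∃ A : Finset (Fin m), A.Nonempty ∧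
          A ⊆ (Finset.univ.filter fun i : Fin m => p i ≤ s) ∧
          (∀ t ∈ 𝒯, ((A.filter fun i => p i ≤ t).card : ℤ) ≤ B' t) ∧ n = A.card} : ℕ) : ℤ) =
        B' s := by
  intro s hs
  set R : ℝ → Finset (Fin m) := fun t => Finset.univ.filter fun i : Fin m => p i ≤ t with hR
  have memR : ∀ t i, i ∈ R t ↔ p i ≤ t := fun t i => by simp [hR]
  have Rmono : ∀ {t u : ℝ}, t ≤ u → R t ⊆ R u := fun {t u} h i hi =>
    (memR u i).2 (((memR t i).1 hi).trans h)
  have Rcard : ∀ {t u : ℝ}, t ≤ u → ((R t).card : ℤ) ≤ (R u).card := fun h => by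
    exact_mod_cast Finset.card_le_card (Rmono h)
  obtain ⟨D, hD⟩ : ∃ D : ℝ → ℤ, D = fun t => max 0 (sSup {x : ℤ | ∃ l ∈ 𝒯, l ≤ t ∧
        x = ((R l).card : ℤ) - (B l : ℤ)}) := ⟨_, rfl⟩
  have hB : ∀ t ∈ 𝒯, B' t = ((R t).card : ℤ) - D t := fun t ht => by
    rw [hD]; exact hB' t ht
  have D_nonneg : ∀ t, 0 ≤ D t := fun t => by rw [hD]; exact le_max_left _ _
  have le_D : ∀ t, ∀ l ∈ 𝒯, l ≤ t → ((R l).card : ℤ) - B l ≤ D t := by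
    intro t l hl hlt
    rw [hD]
    refine le_max_of_le_right (le_csSup ⟨((R t).card : ℤ), ?_⟩ ⟨l, hl, hlt, rfl⟩)
    rintro x ⟨u, -, hut, rfl⟩
    have := Rcard hut
    omega
  have D_le : ∀ t ∈ 𝒯, ∀ c : ℤ, 0 ≤ c →
      (∀ l ∈ 𝒯, l ≤ t → ((R l).card : ℤ) - B l ≤ c) → D t ≤ c := by
    intro t ht c hc h
    rw [hD]
    refine max_le hc (csSup_le ⟨_, t, ht, le_rfl, rfl⟩ ?_)
    rintro x ⟨l, hl, hlt, rfl⟩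
    exact h l hl hlt
  have D_le_R : ∀ t ∈ 𝒯, D t ≤ (R t).card := fun t ht =>
    D_le t ht _ (by positivity) fun l _ hlt => by
      have := Rcard hlt
      omega
  have D_mono : ∀ t ∈ 𝒯, ∀ u, t ≤ u → D t ≤ D u := fun t ht u htu =>
    D_le t ht _ (D_nonneg u) fun l hl hlt => le_D u l hl (hlt.trans htu)
  have B'_mono : ∀ t ∈ 𝒯, ∀ u ∈ 𝒯, t ≤ u → B' t ≤ B' u := by
    intro t ht u hu htu
    have h1 := Rcard htu
    have h2 := D_nonneg t
    have : D u ≤ D t + ((R u).card - (R t).card) := by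
      refine D_le u hu _ (by omega) fun l hl hlu => ?_
      rcases le_total l t with hlt | htl
      · have := le_D t l hl hlt
        omega
      · have h3 := le_D t t ht le_rfl
        have h4 := hmono t ht l hl htl
        have h5 := Rcard hlu
        omega
    rw [hB t ht, hB u hu]
    omega
  have upper : ∀ n ∈ {n : ℕ | ∃ A : Finset (Fin m), A.Nonempty ∧ A ⊆ R s ∧
      (∀ t ∈ 𝒯, ((A.filter fun i => p i ≤ t).card : ℤ) ≤ B' t) ∧ n = A.card},
      n ≤ (B' s).toNat := by
    rintro n ⟨A, -, hAs, hA, rfl⟩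
    have h := hA s hs
    rw [Finset.filter_true_of_mem fun i hi => (memR s i).1 (hAs hi)] at h
    omega
  have hBs : 0 ≤ B' s := by
    have := D_le_R s hs
    rw [hB s hs]
    omega
  rw [← Int.toNat_of_nonneg hBs, Nat.cast_inj]
  refine le_antisymm (csSup_le' upper) ?_
  -- If `B' s = 0` the set may be empty, and then its supremum is `0` by convention.
  rcases Nat.eq_zero_or_pos (B' s).toNat with h0 | hpos
  · rw [h0]
    exact Nat.zero_le _
  obtain ⟨C, hCs, hCcard, hlow⟩ := exists_lower_subset p (R s) (D s).toNat (by
    have := D_le_R s hs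
    omega)
  have hCD : (C.card : ℤ) = D s := by
    rw [hCcard]
    exact Int.toNat_of_nonneg (D_nonneg s)
  have hAcard : (((R s \ C).card : ℕ) : ℤ) = B' s := by
    rw [Finset.cast_card_sdiff hCs, hCD, hB s hs]
  refine le_csSup ⟨_, upper⟩ ⟨R s \ C, ?_, Finset.sdiff_subset, ?_, by omega⟩
  · rw [← Finset.card_pos]
    omega
  intro t ht
  rcases le_total s t with hst | hts
  · have h1 := Finset.card_filter_le (R s \ C) fun i => p i ≤ t
    have h2 := B'_mono s hs t ht hst
    omega
  · have hfil : ((R s \ C).filter fun i => p i ≤ t) = R t \ C := by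
      ext i
      simp only [Finset.mem_filter, Finset.mem_sdiff, memR]
      exact ⟨fun h => ⟨h.2, h.1.2⟩, fun h => ⟨⟨h.1.trans hts, h.2⟩, h.1⟩⟩
    rw [hfil, hB t ht]
    by_cases hsub : R t ⊆ C
    · rw [Finset.sdiff_eq_empty_iff_subset.2 hsub]
      have := D_le_R t ht
      simpa using this
    · obtain ⟨j, hjt, hjC⟩ := Finset.not_subset.1 hsub
      have hCt : C ⊆ R t := by
        intro i hi
        have hij : p i ≤ p j := by
          by_contra hcon
          exact hjC (hlow i hi j (Rmono hts hjt) (not_le.1 hcon))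
        exact (memR t i).2 (hij.trans ((memR t j).1 hjt))
      rw [Finset.cast_card_sdiff hCt, hCD]
      have := D_mono t ht s hts
      omega
end

section
/- Let m ≥ 1, p : Fin m → ℝ with p_i ∈ (0,1] for all i, c ≥ 0, 0 ≤ s₁ < s₂ ≤ 1, and κ > 0 a real number. Define B^κ(t) = |{i ∈ {1,…,m} : i·κ − c ≤ t}| and V̄'(t) = |{i : p_i ≥ 1 − t}|. Then the following are equivalent: (a) for all t ∈ [s₁, s₂], B^κ(t) ≥ V̄'(t); (b) κ·V̄'(s₁) ≤ s₁ + c, and for every i with s₁ ≤ 1 − p_i ≤ s₂, κ·V̄'(1 − p_i) ≤ (1 − p_i) + c, where V̄'(1 − p_i) = |{j : p_j ≥ p_i}|. (Proposition 2: this characterizes κ_max = max{κ : ∀ t ∈ 𝕋, B^κ(t) ≥ V̄'(t)} as the minimum of κ₀ = (s₁+c)/V̄'(s₁) and the κ_i = (1−p_i+c)/V̄'(1−p_i) over i with 1 − p_i ∈ [s₁,s₂].) -/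
open Finset

/-!
Inverting the step function `B^κ` (`le_card_envelope_iff`) turns domination at `t` into
`κ * V̄'(t) ≤ t + c`. The left side is a step function of `t`, jumping only at the points `1 - p i`,
and the right side is increasing, so on `[s₁, s₂]` it suffices to check the inequality at `s₁` and
at the jump points lying in the interval. For a given `t`, the relevant jump point is the last one
up to `t`, that is `1 - p i` with `p i` minimal among the p-values that are at least `1 - t`.
-/

/-- The generalized inverse of the envelope `B^κ`: for counts `n ≤ m`, so that the cap at `m` is
harmless, `n ≤ B^κ(t)` exactly when `t` has reached the `n`-th jump `n * κ - c`. The hypothesis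
`0 ≤ t + c` covers `n = 0`. -/
lemma le_card_envelope_iff {m n : ℕ} (hn : n ≤ m) {κ c t : ℝ} (hκ : 0 < κ) (ht : 0 ≤ t + c) :
    n ≤ ((Finset.Icc 1 m).filter fun i : ℕ => (i : ℝ) * κ - c ≤ t).card ↔
      κ * (n : ℝ) ≤ t + c := by
  constructor
  · intro h
    by_contra! hlt
    have hn0 : 0 < n := by
      rcases Nat.eq_zero_or_pos n with rfl | h0
      · simp only [Nat.cast_zero, mul_zero] at hlt
        linarith
      · exact h0
    -- Only indices below `n` can be counted, which leaves at most `n - 1` of them.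
    have hsub : ((Finset.Icc 1 m).filter fun i : ℕ => (i : ℝ) * κ - c ≤ t) ⊆
        Finset.Icc 1 (n - 1) := by
      intro i hi
      simp only [Finset.mem_filter, Finset.mem_Icc] at hi ⊢
      have hin : (i : ℝ) < n := by
        by_contra! hge
        nlinarith [mul_le_mul_of_nonneg_left hge hκ.le]
      have : i < n := by exact_mod_cast hin
      omega
    have hcard := Finset.card_le_card hsub
    rw [Nat.card_Icc] at hcard
    omega
  · intro h
    have hsub : Finset.Icc 1 n ⊆
        ((Finset.Icc 1 m).filter fun i : ℕ => (i : ℝ) * κ - c ≤ t) := by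
      intro i hi
      simp only [Finset.mem_filter, Finset.mem_Icc] at hi ⊢
      have hin : (i : ℝ) ≤ n := by exact_mod_cast hi.2
      refine ⟨⟨hi.1, hi.2.trans hn⟩, ?_⟩
      nlinarith [mul_le_mul_of_nonneg_left hin hκ.le]
    simpa using Finset.card_le_card hsub

/-- Proposition 2: for the default candidate envelope `B^κ(t) = |{1 ≤ i ≤ m : i·κ - c ≤ t}|`,
domination of `V̄'(t) = |{i : p_i ≥ 1 - t}|` on `𝕋 = [s₁, s₂]` is equivalent to the finitely
many inequalities `κ·V̄'(s₁) ≤ s₁ + c` and `κ·V̄'(1 - p_i) ≤ (1 - p_i) + c` for all `i` with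
`1 - p_i ∈ [s₁, s₂]`; this characterizes `κ_max` as the minimum of `κ₀` and the `κ_i`. -/
theorem stmt_13 (m : ℕ) (hm : 1 ≤ m) (p : Fin m → ℝ)
    (hp : ∀ i, p i ∈ Set.Ioc (0 : ℝ) 1)
    (c : ℝ) (hc : 0 ≤ c) (s₁ s₂ : ℝ) (hs₁ : 0 ≤ s₁) (hs : s₁ < s₂) (hs₂ : s₂ ≤ 1)
    (κ : ℝ) (hκ : 0 < κ) :
    (∀ t ∈ Set.Icc s₁ s₂,
        (Finset.univ.filter fun i : Fin m => 1 - t ≤ p i).card ≤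
          ((Finset.Icc 1 m).filter fun i : ℕ => (i : ℝ) * κ - c ≤ t).card) ↔
      (κ * ((Finset.univ.filter fun j : Fin m => 1 - s₁ ≤ p j).card : ℝ) ≤ s₁ + c ∧
        ∀ i : Fin m, s₁ ≤ 1 - p i → 1 - p i ≤ s₂ →
          κ * ((Finset.univ.filter fun j : Fin m => p i ≤ p j).card : ℝ) ≤ (1 - p i) + c) := by
  have hle (t : ℝ) : (Finset.univ.filter fun i : Fin m => 1 - t ≤ p i).card ≤ m := by
    simpa using Finset.card_filter_le (Finset.univ : Finset (Fin m)) (fun i => 1 - t ≤ p i)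
  have key (t : ℝ) (ht : s₁ ≤ t) :=
    le_card_envelope_iff (hle t) (c := c) (t := t) hκ (by linarith)
  constructor
  · intro h
    refine ⟨(key s₁ le_rfl).1 (h s₁ ⟨le_rfl, hs.le⟩), fun i h1 h2 => ?_⟩
    simpa using (key (1 - p i) h1).1 (h (1 - p i) ⟨h1, h2⟩)
  · rintro ⟨h0, h⟩ t ⟨ht1, ht2⟩
    rw [key t ht1]
    -- It suffices to bound the count at `t` by a count known to be controlled at some `u ≤ t`.
    have mono (s : Finset (Fin m)) (u : ℝ) (hu : u ≤ t) (hs' : κ * (s.card : ℝ) ≤ u + c)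
        (hsub : (Finset.univ.filter fun i : Fin m => 1 - t ≤ p i) ⊆ s) :
        κ * ((Finset.univ.filter fun i : Fin m => 1 - t ≤ p i).card : ℝ) ≤ t + c := by
      have hcard : ((Finset.univ.filter fun i : Fin m => 1 - t ≤ p i).card : ℝ) ≤ s.card := by
        exact_mod_cast Finset.card_le_card hsub
      linarith [mul_le_mul_of_nonneg_left hcard hκ.le]
    rcases (Finset.univ.filter fun i : Fin m => 1 - t ≤ p i).eq_empty_or_nonempty with he | hne
    · rw [he, Finset.card_empty, Nat.cast_zero, mul_zero]
      linarith
    · obtain ⟨j, hj, hmin⟩ := Finset.exists_min_image _ p hne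
      simp only [Finset.mem_filter, Finset.mem_univ, true_and] at hj hmin
      rcases le_or_gt s₁ (1 - p j) with hj1 | hj1
      · refine mono _ (1 - p j) (by linarith) (h j hj1 (by linarith)) fun k hk => ?_
        simp only [Finset.mem_filter, Finset.mem_univ, true_and] at hk ⊢
        exact hmin k hk
      -- The last jump up to `t` precedes `s₁`, so the count is constant on `[s₁, t]`.
      · refine mono _ s₁ ht1 h0 fun k hk => ?_
        simp only [Finset.mem_filter, Finset.mem_univ, true_and] at hk ⊢
        linarith [hmin k hk]
end

section
/- Let m ≥ 1, p : Fin m → ℝ with p_i ∈ (0,1] for all i, 𝒩 ⊆ Fin m, 𝒯 ⊆ [0,1], and B : 𝒯 → ℕ such that V(t) ≤ B(t) for all t ∈ 𝒯. For γ ∈ [0,1] define t_max(γ) = max{ p_i : ∃ t ∈ 𝒯, p_i ≤ t and (B(t) : ℝ) ≤ γ·R(t) }, with t_max(γ) = 0 if no such i exists. Then for every γ ∈ [0,1], (V(t_max(γ)) : ℝ) ≤ γ·R(t_max(γ)); in particular the false discovery proportion of the rejected set {i : p_i ≤ t_max(γ)} is at most γ. (Deterministic core of Theorem 6.) -/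
/-!
When the set defining `t_max(γ)` is nonempty, it is finite, so its supremum is attained at some
`p i`, with a witness `t ∈ 𝒯` satisfying `p i ≤ t` and `B t ≤ γ * R t`. Every p-value `≤ t` belongs
to that set as well, so thresholding at `t_max(γ)` and at `t` rejects the same hypotheses, and
`V(t_max(γ)) = V t ≤ B t ≤ γ * R t = γ * R(t_max(γ))`. When the set is empty, nothing is rejected.
-/

open Finset

/-- Deterministic core of Theorem 6: if `B` dominates `V` on `𝒯 ⊆ [0,1]`, then for every
`γ ∈ [0,1]`, rejecting all p-values at most
`t_max(γ) = max{p_i : ∃ t ∈ 𝒯, p_i ≤ t ∧ B(t) ≤ γ·R(t)}` (0 if no such `i`) yields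
`V(t_max(γ)) ≤ γ·R(t_max(γ))`, i.e. a false discovery proportion of at most `γ`. -/
theorem stmt_14 (m : ℕ) (hm : 1 ≤ m) (p : Fin m → ℝ)
    (hp : ∀ i, p i ∈ Set.Ioc (0 : ℝ) 1)
    (𝒩 : Finset (Fin m)) (𝒯 : Set ℝ) (h𝒯 : 𝒯 ⊆ Set.Icc (0 : ℝ) 1)
    (B : ℝ → ℕ)
    (hV : ∀ t ∈ 𝒯, (𝒩.filter fun i => p i ≤ t).card ≤ B t) :
    ∀ γ ∈ Set.Icc (0 : ℝ) 1,
      ((𝒩.filter fun i => p i ≤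
          sSup {x : ℝ | ∃ i : Fin m, p i = x ∧ ∃ t ∈ 𝒯, p i ≤ t ∧
            (B t : ℝ) ≤ γ * ((Finset.univ.filter fun j : Fin m => p j ≤ t).card : ℝ)}).card : ℝ) ≤
        γ * ((Finset.univ.filter fun i : Fin m => p i ≤
          sSup {x : ℝ | ∃ i : Fin m, p i = x ∧ ∃ t ∈ 𝒯, p i ≤ t ∧
            (B t : ℝ) ≤ γ * ((Finset.univ.filter fun j : Fin m => p j ≤ t).card : ℝ)}).card : ℝ) := by
  intro γ _
  set S : Set ℝ := {x : ℝ | ∃ i : Fin m, p i = x ∧ ∃ t ∈ 𝒯, p i ≤ t ∧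
    (B t : ℝ) ≤ γ * ((Finset.univ.filter fun j : Fin m => p j ≤ t).card : ℝ)} with hS
  have hfin : S.Finite :=
    (Set.finite_range p).subset (by rintro x ⟨i, hi, -⟩; exact ⟨i, hi⟩)
  rcases S.eq_empty_or_nonempty with hempty | hne
  · -- Here `sSup ∅ = 0` in `ℝ`, and no p-value is `≤ 0`.
    have hnone : ∀ i, ¬ p i ≤ sSup S := fun i => by
      rw [hempty, Real.sSup_empty]
      exact not_le.mpr (hp i).1
    simp [hnone]
  · obtain ⟨i, hi, t, ht, hit, hB⟩ := hne.csSup_mem hfin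
    -- Every p-value `≤ t` lies in `S`, with the same witness `t`.
    have hiff : ∀ j, p j ≤ sSup S ↔ p j ≤ t := fun j =>
      ⟨fun h => h.trans (hi ▸ hit),
        fun h => le_csSup hfin.bddAbove ⟨j, rfl, t, ht, h, hB⟩⟩
    simp only [hiff]
    exact (Nat.cast_le.mpr (hV t ht)).trans hB
end

section
/- Let (Ω, ℱ, ℙ) be a probability space, p_1,…,p_m : Ω → ℝ measurable random p-values with values in (0,1], 𝒩 ⊆ {1,…,m}, 𝒯 ⊆ [0,1], and B : Ω → (𝒯 → ℕ) a (possibly data-dependent) envelope satisfying ℙ{ω : ∀ t ∈ 𝒯, V(t)(ω) ≤ B(ω)(t)} ≥ 1/2. For γ ∈ [0,1] and each ω define t_max(γ, ω) = max{ p_i(ω) : ∃ t ∈ 𝒯, p_i(ω) ≤ t and (B(ω)(t) : ℝ) ≤ γ·R(t)(ω) }, with t_max = 0 if no such i exists, and let FDP_γ(ω) be the false discovery proportion of the rejection set {i : p_i(ω) ≤ t_max(γ,ω)}. Then ℙ{ω : ∀ γ ∈ [0,1], FDP_γ(ω) ≤ γ} ≥ 1/2: the procedure controls the median of the FDP simultaneously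 over all γ ∈ [0,1], even when γ is chosen after seeing the data. (Theorem 6.) -/
/-!
The argument is pathwise: the envelope event `∀ t ∈ 𝒯, V(t) ≤ B(t)` is contained in the event that
the false discovery proportion is at most `γ` for every `γ`, and the outer measure is monotone.
Fix an outcome in the envelope event and a `γ`. If no p-value qualifies, nothing is rejected.
Otherwise the maximum `t_max` over the finite set of qualifying p-values is attained, with some
witness `t ∈ 𝒯` such that `t_max ≤ t` and `B(t) ≤ γ R(t)`. Every p-value below `t` qualifies through
the same `t`, so thresholding at `t_max` and at `t` rejects the same hypotheses, and
`V(t) ≤ B(t) ≤ γ R(t)`.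
-/

open Finset MeasureTheory

/-- Theorem 6: if `B` is a (possibly data-dependent) 50%-confidence envelope for `V` on
`𝒯 ⊆ [0,1]`, then with probability at least 1/2, simultaneously for every `γ ∈ [0,1]`,
the false discovery proportion of the rejection set `{i : p_i ≤ t_max(γ)}` is at most `γ`,
where `t_max(γ) = max{p_i : ∃ t ∈ 𝒯, p_i ≤ t ∧ B(t) ≤ γ·R(t)}` (0 if no such `i`). -/
theorem stmt_15 {Ω : Type*} [MeasurableSpace Ω] (μ : Measure Ω) [IsProbabilityMeasure μ]
    (m : ℕ) (p : Fin m → Ω → ℝ)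
    (hmeas : ∀ i, Measurable (p i))
    (hp : ∀ i ω, p i ω ∈ Set.Ioc (0 : ℝ) 1)
    (𝒩 : Finset (Fin m)) (𝒯 : Set ℝ) (h𝒯 : 𝒯 ⊆ Set.Icc (0 : ℝ) 1)
    (B : Ω → ℝ → ℕ)
    (hB : 1 / 2 ≤ μ {ω | ∀ t ∈ 𝒯, (𝒩.filter fun i => p i ω ≤ t).card ≤ B ω t}) :
    1 / 2 ≤ μ {ω | ∀ γ ∈ Set.Icc (0 : ℝ) 1,
      ((𝒩.filter fun i => p i ω ≤
          sSup {x : ℝ | ∃ i : Fin m, p i ω = x ∧ ∃ t ∈ 𝒯, p i ω ≤ t ∧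
            (B ω t : ℝ) ≤ γ * ((Finset.univ.filter fun j : Fin m => p j ω ≤ t).card : ℝ)}).card : ℝ) /
        ((Finset.univ.filter fun i : Fin m => p i ω ≤
          sSup {x : ℝ | ∃ i : Fin m, p i ω = x ∧ ∃ t ∈ 𝒯, p i ω ≤ t ∧
            (B ω t : ℝ) ≤ γ * ((Finset.univ.filter fun j : Fin m => p j ω ≤ t).card : ℝ)}).card : ℝ)
        ≤ γ} := by
  refine hB.trans (measure_mono fun ω hω γ hγ => ?_)
  set S : Set ℝ := {x : ℝ | ∃ i : Fin m, p i ω = x ∧ ∃ t ∈ 𝒯, p i ω ≤ t ∧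
    (B ω t : ℝ) ≤ γ * ((Finset.univ.filter fun j : Fin m => p j ω ≤ t).card : ℝ)} with hS
  have hfin : S.Finite :=
    (Set.finite_range fun i => p i ω).subset fun x ⟨i, hi, _⟩ => ⟨i, hi⟩
  rcases S.eq_empty_or_nonempty with hemp | hne
  · -- `sSup ∅ = 0` and the p-values are positive, so nothing is rejected and the ratio is `0 / 0 = 0`.
    have hR : (Finset.univ.filter fun i : Fin m => p i ω ≤ sSup S) = ∅ := by
      refine Finset.filter_eq_empty_iff.mpr fun i _ => ?_
      rw [hemp, Real.sSup_empty]
      exact not_le.mpr (hp i ω).1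
    rw [hR]
    simpa using hγ.1
  · obtain ⟨i, hi, t, ht, hit, hBt⟩ := hne.csSup_mem hfin
    -- Every p-value below `t` lies in `S`, with the same witness `t`.
    have hiff : ∀ j, p j ω ≤ sSup S ↔ p j ω ≤ t := fun j =>
      ⟨fun h => h.trans (hi ▸ hit), fun h => le_csSup hfin.bddAbove ⟨j, rfl, t, ht, h, hBt⟩⟩
    simp only [hiff]
    refine div_le_of_le_mul₀ (Nat.cast_nonneg _) hγ.1 (le_trans ?_ hBt)
    exact_mod_cast hω t ht
end

section
/- Let m ≥ 1, p : Fin m → ℝ with p_i ∈ (0,1] for all i, 𝒩 ⊆ Fin m, 𝒯 ⊆ [0,1], and B : 𝒯 → ℕ such that V(t) ≤ B(t) for all t ∈ 𝒯. For γ ∈ [0,1] let Rej(γ) = { i : ∃ t ∈ 𝒯, p_i ≤ t and (B(t) : ℝ) ≤ γ·R(t) }; this is exactly the set of indices whose mFDP-adjusted p-value p_i^ad = min{ B(t)/R(t) : t ∈ 𝒯 ∩ [p_i, 1] } is at most γ. Then for every γ ∈ [0,1], (|𝒩 ∩ Rej(γ)| : ℝ) ≤ γ·|Rej(γ)|, i.e.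 rejecting all hypotheses with adjusted p-value at most γ yields a false discovery proportion of at most γ. (Deterministic core of Proposition 3.) -/
/-!
If `Rej(γ)` is empty, both sides vanish. Otherwise let `t` be a threshold witnessing the rejection
of the hypothesis with the largest rejected p-value. Every rejected p-value is then at most `t`, and
conversely `t` witnesses the rejection of every `j` with `p j ≤ t`, so `Rej(γ) = {j : p j ≤ t}`.
The claim becomes `V(t) ≤ γ * R(t)`, which follows from `V(t) ≤ B(t) ≤ γ * R(t)`.
-/

open Finset

attribute [local instance] Classical.propDecidable

/-- Deterministic core of Proposition 3: if `B` dominates `V` on `𝒯 ⊆ [0,1]`, then for every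
`γ ∈ [0,1]`, the set `Rej(γ) = {i : ∃ t ∈ 𝒯, p_i ≤ t ∧ B(t) ≤ γ·R(t)}` (the hypotheses
whose mFDP-adjusted p-value is at most `γ`) satisfies `|𝒩 ∩ Rej(γ)| ≤ γ·|Rej(γ)|`. -/
theorem stmt_16 (m : ℕ) (hm : 1 ≤ m) (p : Fin m → ℝ)
    (hp : ∀ i, p i ∈ Set.Ioc (0 : ℝ) 1)
    (𝒩 : Finset (Fin m)) (𝒯 : Set ℝ) (h𝒯 : 𝒯 ⊆ Set.Icc (0 : ℝ) 1)
    (B : ℝ → ℕ)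
    (hV : ∀ t ∈ 𝒯, (𝒩.filter fun i => p i ≤ t).card ≤ B t) :
    ∀ γ ∈ Set.Icc (0 : ℝ) 1,
      ((𝒩 ∩ (Finset.univ.filter fun i : Fin m => ∃ t ∈ 𝒯, p i ≤ t ∧
          (B t : ℝ) ≤ γ * ((Finset.univ.filter fun j : Fin m => p j ≤ t).card : ℝ))).card : ℝ) ≤
        γ * ((Finset.univ.filter fun i : Fin m => ∃ t ∈ 𝒯, p i ≤ t ∧
          (B t : ℝ) ≤ γ * ((Finset.univ.filter fun j : Fin m => p j ≤ t).card : ℝ)).card : ℝ) := by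
  intro γ hγ
  set S := Finset.univ.filter fun i : Fin m => ∃ t ∈ 𝒯, p i ≤ t ∧
    (B t : ℝ) ≤ γ * ((Finset.univ.filter fun j : Fin m => p j ≤ t).card : ℝ) with hS
  rcases S.eq_empty_or_nonempty with h | h
  · simp [h]
  · obtain ⟨i, hi, hmax⟩ := S.exists_max_image p h
    obtain ⟨t, ht, hit, hB⟩ := (Finset.mem_filter.1 hi).2
    have hmem : ∀ j, j ∈ S ↔ p j ≤ t := fun j =>
      ⟨fun hj => (hmax j hj).trans hit,
        fun hj => Finset.mem_filter.2 ⟨Finset.mem_univ _, t, ht, hj, hB⟩⟩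
    have hR : (Finset.univ.filter fun j : Fin m => p j ≤ t) = S := by
      ext j
      simp only [Finset.mem_filter, Finset.mem_univ, true_and, hmem]
    have hN : 𝒩 ∩ S = 𝒩.filter fun j => p j ≤ t := by
      ext j
      simp only [Finset.mem_filter, Finset.mem_inter, hmem]
    rw [hR] at hB
    rw [hN]
    exact le_trans (by exact_mod_cast hV t ht) hB
end

section
/- Let m ≥ 1, p : Fin m → ℝ with p_i ∈ (0,1] for all i, 0 ≤ s₁ < s₂ ≤ 1, and B : ℝ → ℕ nondecreasing on [s₁, s₂]. Fix i with p_i ≤ s₂, set a = max(s₁, p_i), and let G = ({s₁} ∪ {p_1, …, p_m}) ∩ [a, s₂]. Then G is a nonempty finite set, R(t) ≥ 1 for all t ∈ [a, s₂], and the infimum of (B(t) : ℝ)/R(t) over t ∈ [a, s₂] is attained and equals the minimum of (B(t) : ℝ)/R(t) over t ∈ G. (Proposition 4: the adjusted p-value p_i^ad = min{B(t)/R(t) : t ∈ 𝕋 ∩ [p_i,1]} for 𝕋 = [s₁,s₂] can be computed over the finite grid {s₁, p_1, …, p_m}.) -/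
/-!
The count `R(t)` only jumps at the p-values. Given `t ∈ [a, s₂]` with `a = max s₁ (p i)`, let `u` be
the largest grid point that is at most `t` (it exists because `a` itself lies in the grid). No
p-value lies in `(u, t]`, so `R(u) = R(t)`, while `B(u) ≤ B(t)` by monotonicity; hence
`B(u)/R(u) ≤ B(t)/R(t)`. A minimizer over the finite nonempty grid therefore minimizes over
all of `[a, s₂]`.
-/

open Finset

attribute [local instance] Classical.propDecidable

/-- Proposition 4: for a `ℕ`-valued envelope `B` nondecreasing on `𝕋 = [s₁, s₂]` and a
hypothesis `i` with `p_i ≤ s₂`, letting `a = max(s₁, p_i)` and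
`G = ({s₁} ∪ {p_1,…,p_m}) ∩ [a, s₂]`: `G` is nonempty, `R(t) ≥ 1` on `[a, s₂]`, and the
infimum of `B(t)/R(t)` over `t ∈ [a, s₂]` is attained at a point of `G` (hence equals the
minimum over the finite grid `G`). -/
theorem stmt_17 (m : ℕ) (hm : 1 ≤ m) (p : Fin m → ℝ)
    (hp : ∀ i, p i ∈ Set.Ioc (0 : ℝ) 1)
    (s₁ s₂ : ℝ) (hs₁ : 0 ≤ s₁) (hs : s₁ < s₂) (hs₂ : s₂ ≤ 1)
    (B : ℝ → ℕ)
    (hmono : ∀ t₁ ∈ Set.Icc s₁ s₂, ∀ t₂ ∈ Set.Icc s₁ s₂, t₁ ≤ t₂ → B t₁ ≤ B t₂)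
    (i : Fin m) (hpi : p i ≤ s₂) :
    ((insert s₁ (Finset.image p Finset.univ)).filter
        fun x => max s₁ (p i) ≤ x ∧ x ≤ s₂).Nonempty ∧
    (∀ t ∈ Set.Icc (max s₁ (p i)) s₂,
      1 ≤ (Finset.univ.filter fun j : Fin m => p j ≤ t).card) ∧
    (∃ t₀ ∈ (insert s₁ (Finset.image p Finset.univ)).filter
        fun x => max s₁ (p i) ≤ x ∧ x ≤ s₂,
      ∀ t ∈ Set.Icc (max s₁ (p i)) s₂,
        (B t₀ : ℝ) / ((Finset.univ.filter fun j : Fin m => p j ≤ t₀).card : ℝ) ≤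
          (B t : ℝ) / ((Finset.univ.filter fun j : Fin m => p j ≤ t).card : ℝ)) := by
  set a := max s₁ (p i) with ha
  set G := (insert s₁ (Finset.image p Finset.univ)).filter fun x => a ≤ x ∧ x ≤ s₂ with hG
  have haG : a ∈ G := by
    rw [hG, Finset.mem_filter]
    refine ⟨?_, le_rfl, max_le hs.le hpi⟩
    rcases max_choice s₁ (p i) with h | h
    · rw [ha, h]; exact Finset.mem_insert_self _ _
    · rw [ha, h]
      exact Finset.mem_insert_of_mem (Finset.mem_image_of_mem p (Finset.mem_univ i))
  refine ⟨⟨a, haG⟩, ?_, ?_⟩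
  · intro t ht
    exact Finset.card_pos.mpr
      ⟨i, Finset.mem_filter.mpr ⟨Finset.mem_univ i, (le_max_right s₁ (p i)).trans ht.1⟩⟩
  · obtain ⟨t₀, ht₀, hmin⟩ := Finset.exists_min_image G
      (fun t => (B t : ℝ) / ((Finset.univ.filter fun j : Fin m => p j ≤ t).card : ℝ)) ⟨a, haG⟩
    refine ⟨t₀, ht₀, fun t ht => ?_⟩
    -- `u` is the largest grid point at most `t`
    obtain ⟨u, hu, hmax⟩ := Finset.exists_max_image (G.filter fun x => x ≤ t) id
      ⟨a, Finset.mem_filter.mpr ⟨haG, ht.1⟩⟩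
    obtain ⟨huG, hut⟩ := Finset.mem_filter.mp hu
    have hau : a ≤ u := (Finset.mem_filter.mp huG).2.1
    have hR : (Finset.univ.filter fun j : Fin m => p j ≤ u)
        = Finset.univ.filter fun j : Fin m => p j ≤ t := by
      refine Finset.filter_congr fun j _ => ⟨fun h => h.trans hut, fun h => ?_⟩
      rcases le_total (p j) a with hj | hj
      · exact hj.trans hau
      · exact hmax (p j) (Finset.mem_filter.mpr ⟨Finset.mem_filter.mpr
          ⟨Finset.mem_insert_of_mem (Finset.mem_image_of_mem p (Finset.mem_univ j)),
            hj, h.trans ht.2⟩, h⟩)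
    have hsa : s₁ ≤ a := le_max_left _ _
    have hB : B u ≤ B t :=
      hmono u ⟨hsa.trans hau, hut.trans ht.2⟩ t ⟨hsa.trans ht.1, ht.2⟩ hut
    refine (hmin u huG).trans ?_
    simp only [hR]
    gcongr
end

section
/- Let m ≥ 0, p : Fin m → ℝ, and t ∈ (0, 1/2]. Then max{ |A| : A ⊆ Fin m and |{i ∈ A : p_i ≤ t}| ≤ |{i ∈ A : p_i ≥ 1 − t}| } = min( m, |{i : p_i > t}| + |{i : p_i ≥ 1 − t}| ). In words: the largest cardinality of an index set on which the Schweder–Spjøtvoll–Storey local test accepts (i.e. the set contains at least as many p-values ≥ 1 − t as p-values ≤ t) equals m·π̄₀' capped at m. (Identity derived in the closed-testing reinterpretation of the estimator, Supplement Section B.1.) -/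
open Finset

/-!
Write `L = {p ≤ t}`, `G = {p > t}`, `U = {p ≥ 1 - t}`.  An accepted set `A` satisfies
`|A| = |A ∩ L| + |A ∩ G| ≤ |A ∩ U| + |A ∩ G| ≤ |U| + |G|`, which gives the upper bound.
The bound is attained by `A = G ∪ B`, where `L ∩ U ⊆ B ⊆ L` and `|B| = min |L| |U|`: such an `A`
contains all of `U`, so it is accepted.  Taking `B ⊇ L ∩ U` matters only for `t = 1/2`, where
p-values equal to `1/2` are counted on both sides.
-/

/-- Supplement Section B.1: for `t ∈ (0, 1/2]`, the largest cardinality of an index set `A`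
on which the Schweder–Spjøtvoll–Storey local test accepts, i.e.
`|{i ∈ A : p_i ≤ t}| ≤ |{i ∈ A : p_i ≥ 1 - t}|`, equals
`min(m, |{i : p_i > t}| + |{i : p_i ≥ 1 - t}|)`. -/
theorem stmt_18 (m : ℕ) (p : Fin m → ℝ) (t : ℝ) (ht : t ∈ Set.Ioc (0 : ℝ) (1 / 2)) :
    sSup {n : ℕ | ∃ A : Finset (Fin m),
        (A.filter fun i => p i ≤ t).card ≤ (A.filter fun i => 1 - t ≤ p i).card ∧
        n = A.card} =
      min m ((Finset.univ.filter fun i : Fin m => t < p i).card +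
        (Finset.univ.filter fun i : Fin m => 1 - t ≤ p i).card) := by
  set L := Finset.univ.filter fun i : Fin m => p i ≤ t with hL
  set G := Finset.univ.filter fun i : Fin m => t < p i with hG
  set U := Finset.univ.filter fun i : Fin m => 1 - t ≤ p i with hU
  have hLG : L.card + G.card = m := by
    have h := Finset.card_filter_add_card_filter_not (s := (Finset.univ : Finset (Fin m)))
      (fun i => p i ≤ t)
    simpa only [not_le, Finset.card_univ, Fintype.card_fin] using h
  refine IsGreatest.csSup_eq ⟨?_, ?_⟩
  · obtain ⟨B, hUB, hBL, hB⟩ := Finset.exists_subsuperset_card_eq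
      (s := L ∩ U) (t := L) (n := min L.card U.card) Finset.inter_subset_left
      (le_min (Finset.card_le_card Finset.inter_subset_left)
        (Finset.card_le_card Finset.inter_subset_right)) (min_le_left _ _)
    have hBle : ∀ i ∈ B, p i ≤ t := fun i hi => by simpa [hL] using hBL hi
    have hdisj : Disjoint G B := Finset.disjoint_left.2 fun i hi hiB =>
      absurd (hBle i hiB) (not_le.2 (by simpa [hG] using hi))
    refine ⟨G ∪ B, ?_, ?_⟩
    · have h1 : ((G ∪ B).filter fun i => p i ≤ t) ⊆ B := by
        intro i hi
        simp only [hG, Finset.mem_filter, Finset.mem_union, Finset.mem_univ, true_and] at hi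
        exact hi.1.resolve_left (not_lt.2 hi.2)
      have h2 : U ⊆ (G ∪ B).filter fun i => 1 - t ≤ p i := by
        intro i hi
        refine Finset.mem_filter.2 ⟨Finset.mem_union.2 ?_, by simpa [hU] using hi⟩
        rcases lt_or_ge t (p i) with h | h
        · exact Or.inl (by simpa [hG] using h)
        · exact Or.inr (hUB (Finset.mem_inter.2 ⟨by simpa [hL] using h, hi⟩))
      have h3 := Finset.card_le_card h1
      have h4 := Finset.card_le_card h2
      omega
    · rw [Finset.card_union_of_disjoint hdisj]
      omega
  · rintro n ⟨A, hA, rfl⟩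
    have h1 : A.card ≤ m := by simpa using Finset.card_le_univ A
    have h2 := Finset.card_filter_add_card_filter_not (s := A) (fun i => p i ≤ t)
    simp only [not_le] at h2
    have h3 : (A.filter fun i => t < p i).card ≤ G.card :=
      Finset.card_le_card (Finset.filter_subset_filter _ (Finset.subset_univ A))
    have h4 : (A.filter fun i => 1 - t ≤ p i).card ≤ U.card :=
      Finset.card_le_card (Finset.filter_subset_filter _ (Finset.subset_univ A))
    exact le_min h1 (by omega)
end

section
/- Let m ≥ 1, p : Fin m → ℝ, 𝒯 ⊆ ℝ, and B : ℝ → ℕ nondecreasing on 𝒯. Define R(t) = |{i : p_i ≤ t}| and, for t ∈ 𝒯, B'(t) = (R(t) : ℤ) − max(0, sup{ (R(l) : ℤ) − (B(l) : ℤ) : l ∈ 𝒯, l ≤ t }). Then for all t₁ ≤ t₂ in 𝒯: (a) B'(t₁) ≤ B'(t₂) (B' is nondecreasing on 𝒯); (b) B'(t₂) − B'(t₁) ≤ R(t₂) − R(t₁) (B' does not increase faster than the rejection count); and (c) 0 ≤ B'(t) ≤ min(R(t), B(t)) for every t ∈ 𝒯. (Structural properties of the improved envelope B̃' used in the proof of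 Theorem 5.) -/
open Finset

/-!
Write `R t` for the number of `p i ≤ t` and `S t` for the set of values `R l - B l`, `l ∈ 𝒯`, `l ≤ t`.
`R` is nondecreasing and nonnegative, and `B ≥ 0`, so `S t` is bounded above by `R t`; for `t ∈ 𝒯` it
contains `R t - B t`. Hence `sSup (S t)` is a genuine supremum, which gives (c), and `S t₁ ⊆ S t₂`
gives (b). For (a), each element `R l - B l` of `S t₂` is at most `sSup (S t₁) + (R t₂ - R t₁)`:
if `l ≤ t₁` it already belongs to `S t₁`, and if `t₁ < l` then
`R l - B l ≤ R t₂ - B t₁ = (R t₁ - B t₁) + (R t₂ - R t₁)`.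
-/

/-- Structural properties of the improved envelope
`B'(t) = R(t) - max(0, sup{R(l) - B(l) : l ∈ 𝒯, l ≤ t})` built from a `ℕ`-valued `B`
nondecreasing on `𝒯`: (a) `B'` is nondecreasing on `𝒯`; (b) `B'` increases no faster than
the rejection count `R`; (c) `0 ≤ B'(t) ≤ min(R(t), B(t))` on `𝒯`. -/
theorem stmt_19 (m : ℕ) (hm : 1 ≤ m) (p : Fin m → ℝ)
    (𝒯 : Set ℝ) (B : ℝ → ℕ)
    (hmono : ∀ t₁ ∈ 𝒯, ∀ t₂ ∈ 𝒯, t₁ ≤ t₂ → B t₁ ≤ B t₂)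
    (B' : ℝ → ℤ)
    (hB' : ∀ t ∈ 𝒯, B' t = ((Finset.univ.filter fun i : Fin m => p i ≤ t).card : ℤ) -
      max 0 (sSup {x : ℤ | ∃ l ∈ 𝒯, l ≤ t ∧
        x = ((Finset.univ.filter fun i : Fin m => p i ≤ l).card : ℤ) - (B l : ℤ)})) :
    (∀ t₁ ∈ 𝒯, ∀ t₂ ∈ 𝒯, t₁ ≤ t₂ →
      B' t₁ ≤ B' t₂ ∧
      B' t₂ - B' t₁ ≤ ((Finset.univ.filter fun i : Fin m => p i ≤ t₂).card : ℤ) -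
        ((Finset.univ.filter fun i : Fin m => p i ≤ t₁).card : ℤ)) ∧
    (∀ t ∈ 𝒯, 0 ≤ B' t ∧
      B' t ≤ min ((Finset.univ.filter fun i : Fin m => p i ≤ t).card : ℤ) (B t : ℤ)) := by
  have hR : ∀ a b : ℝ, a ≤ b → ((Finset.univ.filter fun i : Fin m => p i ≤ a).card : ℤ) ≤
      ((Finset.univ.filter fun i : Fin m => p i ≤ b).card : ℤ) := by
    intro a b hab
    exact_mod_cast Finset.card_le_card
      (Finset.monotone_filter_right _ fun i _ (hi : p i ≤ a) => hi.trans hab)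
  have hR0 : ∀ a : ℝ, 0 ≤ ((Finset.univ.filter fun i : Fin m => p i ≤ a).card : ℤ) :=
    fun a => Int.natCast_nonneg _
  -- From here on only the monotonicity and nonnegativity of the count `R` are used.
  generalize hRdef : (fun t : ℝ => ((Finset.univ.filter fun i : Fin m => p i ≤ t).card : ℤ)) = R
  have hRt : ∀ t : ℝ, ((Finset.univ.filter fun i : Fin m => p i ≤ t).card : ℤ) = R t :=
    fun t => congrFun hRdef t
  simp only [hRt] at hB' hR hR0 ⊢
  set S : ℝ → Set ℤ := fun t => {x : ℤ | ∃ l ∈ 𝒯, l ≤ t ∧ x = R l - (B l : ℤ)} with hS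
  have hub : ∀ t, R t ∈ upperBounds (S t) := by
    rintro t x ⟨l, -, hlt, rfl⟩
    have := hR l t hlt
    omega
  have hle : ∀ t, ∀ l ∈ 𝒯, l ≤ t → R l - (B l : ℤ) ≤ sSup (S t) := fun t l hl hlt =>
    le_csSup ⟨R t, hub t⟩ ⟨l, hl, hlt, rfl⟩
  have hsup : ∀ t ∈ 𝒯, ∀ c, c ∈ upperBounds (S t) → sSup (S t) ≤ c := fun t ht c hc =>
    csSup_le ⟨_, t, ht, le_rfl, rfl⟩ hc
  have hBS : ∀ t ∈ 𝒯, B' t = R t - max 0 (sSup (S t)) := hB'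
  refine ⟨fun t₁ h₁ t₂ h₂ h₁₂ => ?_, fun t ht => ?_⟩
  · have hR₁₂ := hR t₁ t₂ h₁₂
    have hsup_mono : sSup (S t₁) ≤ sSup (S t₂) := by
      refine hsup t₁ h₁ _ ?_
      rintro x ⟨l, hl, hlt, rfl⟩
      exact hle t₂ l hl (hlt.trans h₁₂)
    have hsup_growth : sSup (S t₂) ≤ sSup (S t₁) + (R t₂ - R t₁) := by
      refine hsup t₂ h₂ _ ?_
      rintro x ⟨l, hl, hlt, rfl⟩
      rcases le_total l t₁ with h | h
      · have := hle t₁ l hl h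
        omega
      · have h3 := hle t₁ t₁ h₁ le_rfl
        have h4 := hR l t₂ hlt
        have h5 := hmono t₁ h₁ l hl h
        omega
    rw [hBS t₁ h₁, hBS t₂ h₂]
    omega
  · have h1 := hsup t ht _ (hub t)
    have h2 := hle t t ht le_rfl
    have h3 := hR0 t
    rw [hBS t ht]
    omega
end
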